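/- arXiv:2407.17428 — 2 statements merged into one kernel-verified Lean document; each statement's English description precedes it below -/
import Mathlib

section
/- For I_H > I_r1 and any fixed I_L > I_r1, the derivative of I_H ↦ f(I_L, I_H) vanishes at I_H if and only if I_H = I_r1 + θ_H/(η_1 − η_3). -/
open Real

noncomputable def UW (η2 η3 Ir1 Ir2 θ I p : ℝ) : ℝ :=
  θ * Real.log (η2 * (I - Ir1)) + η3 * (I - Ir2) - p

noncomputable def priceL (θL η2 η3 Ir1 Ir2 IL : ℝ) : ℝ :=
  θL * Real.log (η2 * (IL - Ir1)) + η3 * (IL - Ir2)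

noncomputable def priceH (θL θH η2 η3 Ir1 Ir2 IL IH : ℝ) : ℝ :=
  priceL θL η2 η3 Ir1 Ir2 IL + θH * Real.log ((IH - Ir1) / (IL - Ir1)) + η3 * (IH - IL)

noncomputable def fobj (θL θH βL βH η1 η2 η3 Ir1 Ir2 ΔC IL IH : ℝ) : ℝ :=
  βL * (priceL θL η2 η3 Ir1 Ir2 IL - η1 * IL)
    + βH * (priceH θL θH η2 η3 Ir1 Ir2 IL IH - η1 * IH) + ΔC

noncomputable def ILstar (θL θH βL βH η1 η3 Ir1 : ℝ) : ℝ :=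
  Ir1 + (θL - βH * θH) / (βL * (η1 - η3))

noncomputable def IHstar (θH η1 η3 Ir1 : ℝ) : ℝ :=
  Ir1 + θH / (η1 - η3)

noncomputable def UE (βL βH η1 ΔC pLo IL pHi IH : ℝ) : ℝ :=
  βL * (pLo - η1 * IL) + βH * (pHi - η1 * IH) + ΔC

theorem hasDerivAt_log_div_const {f : ℝ → ℝ} {f' x c : ℝ} (hf : HasDerivAt f f' x)
    (hx : f x ≠ 0) (hc : c ≠ 0) :
    HasDerivAt (fun y => Real.log (f y / c)) (f' / f x) x := by
  simpa only [div_div_div_cancel_right₀ hc] using (hf.div_const c).log (div_ne_zero hx hc)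

section Derivatives

variable {θL θH βL βH η1 η2 η3 Ir1 Ir2 ΔC IL IH : ℝ}

theorem hasDerivAt_priceH (hIL : IL ≠ Ir1) (hIH : IH ≠ Ir1) :
    HasDerivAt (priceH θL θH η2 η3 Ir1 Ir2 IL) (θH / (IH - Ir1) + η3) IH := by
  have hlog : HasDerivAt (fun y => Real.log ((y - Ir1) / (IL - Ir1))) (1 / (IH - Ir1)) IH :=
    hasDerivAt_log_div_const ((hasDerivAt_id' IH).sub_const Ir1)
      (sub_ne_zero.mpr hIH) (sub_ne_zero.mpr hIL)
  have hlin : HasDerivAt (fun y => η3 * (y - IL)) (η3 * 1) IH :=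
    ((hasDerivAt_id' IH).sub_const IL).const_mul η3
  exact (((hlog.const_mul θH).const_add _).add hlin).congr_deriv (by ring)

theorem hasDerivAt_fobj (hIL : IL ≠ Ir1) (hIH : IH ≠ Ir1) :
    HasDerivAt (fobj θL θH βL βH η1 η2 η3 Ir1 Ir2 ΔC IL)
      (βH * (θH / (IH - Ir1) - (η1 - η3))) IH := by
  have hcost : HasDerivAt (fun y => η1 * y) η1 IH := hasDerivAt_const_mul η1
  have hprofit : HasDerivAt (fun y => priceH θL θH η2 η3 Ir1 Ir2 IL y - η1 * y)
      (θH / (IH - Ir1) + η3 - η1) IH :=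
    (hasDerivAt_priceH hIL hIH).sub hcost
  exact (((hprofit.const_mul βH).const_add _).add_const ΔC).congr_deriv (by ring)

end Derivatives

theorem stmt_6_general
    (θL θH βL βH η1 η2 η3 Ir1 Ir2 ΔC : ℝ) (hβH : βH ≠ 0) (hη : η1 ≠ η3)
    (IL : ℝ) (hIL : Ir1 < IL) (IH : ℝ) (hIH : Ir1 < IH) :
    deriv (fobj θL θH βL βH η1 η2 η3 Ir1 Ir2 ΔC IL) IH = 0 ↔
      IH = Ir1 + θH / (η1 - η3) := by
  have hmargin : η1 - η3 ≠ 0 := sub_ne_zero.mpr hη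
  have hgap : IH - Ir1 ≠ 0 := sub_ne_zero.mpr hIH.ne'
  calc
    deriv (fobj θL θH βL βH η1 η2 η3 Ir1 Ir2 ΔC IL) IH = 0
      ↔ βH * (θH / (IH - Ir1) - (η1 - η3)) = 0 := by
        rw [(hasDerivAt_fobj hIL.ne' hIH.ne').deriv]
    _ ↔ θH / (IH - Ir1) = η1 - η3 := by rw [mul_eq_zero_iff_left hβH, sub_eq_zero]
    _ ↔ IH - Ir1 = θH / (η1 - η3) := by
        rw [div_eq_iff hgap, eq_div_iff hmargin, mul_comm, eq_comm]
    _ ↔ IH = Ir1 + θH / (η1 - η3) := sub_eq_iff_eq_add'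

theorem stmt_6
    (θL θH βL βH η1 η2 η3 Ir1 Ir2 ΔC : ℝ)
    (hθL : 0 < θL) (hθ : θL < θH)
    (hβL0 : 0 < βL) (hβL1 : βL < 1)
    (hβH0 : 0 < βH) (hβH1 : βH < 1)
    (hβ : βL + βH = 1)
    (hη3 : 0 < η3) (hη13 : η3 < η1) (hη2 : 0 < η2)
    (hIr : Ir1 < Ir2)
    (IL : ℝ) (hIL : Ir1 < IL) (IH : ℝ) (hIH : Ir1 < IH) :
    deriv (fun y => fobj θL θH βL βH η1 η2 η3 Ir1 Ir2 ΔC (IL) (y)) IH = 0 ↔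
      IH = Ir1 + θH / (η1 - η3) :=
  stmt_6_general θL θH βL βH η1 η2 η3 Ir1 Ir2 ΔC hβH0.ne' hη13.ne' IL hIL IH hIH
end

section
/- Assume additionally θ_L > β_H·θ_H. Then for all I_L, I_H > I_r1, f(I_L, I_H) ≤ f(I_L*, I_H*), with equality if and only if (I_L, I_H) = (I_L*, I_H*); that is, (I_L*, I_H*) is the unique global maximizer of f on (I_r1, ∞) × (I_r1, ∞). -/
open Real

/-!
Splitting the two logarithms and using `βL + βH = 1` separates the objective into a function of
`IL` plus a function of `IH`. Up to positive factors and constants, each is of the form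
`a * log x - b * x` with `a, b > 0`, where `x` is the performance measured from `Ir1`. Rescaling
`x` by `a / b` turns `log t ≤ t - 1`, which is strict for `t ≠ 1`, into the statement that
`a / b` is the unique maximizer.
-/

/-- The net surplus `a * log x - b * x` from performance `x`, with logarithmic benefit of weight
`a` and unit cost `b`. The objective `fobj` is a combination of two of these, with performances
measured from `Ir1`; as for `Real.log`, only `x > 0` is meaningful. -/
noncomputable def logSurplus (a b x : ℝ) : ℝ :=
  a * log x - b * x

section logSurplus

variable {a b x : ℝ}

lemma logSurplus_div_sub_logSurplus (ha : 0 < a) (hb : 0 < b) (hx : 0 < x) :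
    logSurplus a b (a / b) - logSurplus a b x =
      a * (x / (a / b) - 1 - log (x / (a / b))) := by
  rw [log_div hx.ne' (div_pos ha hb).ne', logSurplus, logSurplus]
  field_simp
  ring

lemma logSurplus_lt_logSurplus_div (ha : 0 < a) (hb : 0 < b) (hx : 0 < x) (hne : x ≠ a / b) :
    logSurplus a b x < logSurplus a b (a / b) := by
  have hab : 0 < a / b := div_pos ha hb
  have hlog : log (x / (a / b)) < x / (a / b) - 1 :=
    log_lt_sub_one_of_pos (div_pos hx hab) ((div_eq_one_iff_eq hab.ne').not.mpr hne)
  rw [← sub_pos, logSurplus_div_sub_logSurplus ha hb hx]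
  exact mul_pos ha (sub_pos.mpr hlog)

lemma logSurplus_le_logSurplus_div (ha : 0 < a) (hb : 0 < b) (hx : 0 < x) :
    logSurplus a b x ≤ logSurplus a b (a / b) := by
  rcases eq_or_ne x (a / b) with rfl | hne
  · exact le_rfl
  · exact (logSurplus_lt_logSurplus_div ha hb hx hne).le

lemma logSurplus_eq_logSurplus_div_iff (ha : 0 < a) (hb : 0 < b) (hx : 0 < x) :
    logSurplus a b x = logSurplus a b (a / b) ↔ x = a / b := by
  refine ⟨fun heq => ?_, fun h => h ▸ rfl⟩
  by_contra hne
  exact (logSurplus_lt_logSurplus_div ha hb hx hne).ne heq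

end logSurplus

section EdgeServer

variable {θL θH βL βH η1 η2 η3 Ir1 Ir2 ΔC IL IH : ℝ}

lemma fobj_eq_logSurplus_add (hβ : βL + βH = 1) (hη2 : 0 < η2) (hIL : Ir1 < IL) (hIH : Ir1 < IH) :
    fobj θL θH βL βH η1 η2 η3 Ir1 Ir2 ΔC IL IH =
      logSurplus (θL - βH * θH) (βL * (η1 - η3)) (IL - Ir1)
        + βH * logSurplus θH (η1 - η3) (IH - Ir1)
        + (θL * log η2 - η3 * Ir2 - (η1 - η3) * Ir1 + ΔC) := by
  have hL : IL - Ir1 ≠ 0 := (sub_pos.mpr hIL).ne'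
  have hH : IH - Ir1 ≠ 0 := (sub_pos.mpr hIH).ne'
  obtain rfl : βL = 1 - βH := eq_sub_of_add_eq hβ
  simp only [fobj, priceH, priceL, logSurplus, log_mul hη2.ne' hL, log_div hH hL]
  ring

lemma ILstar_sub : ILstar θL θH βL βH η1 η3 Ir1 - Ir1 = (θL - βH * θH) / (βL * (η1 - η3)) :=
  add_sub_cancel_left _ _

lemma IHstar_sub : IHstar θH η1 η3 Ir1 - Ir1 = θH / (η1 - η3) :=
  add_sub_cancel_left _ _

lemma lt_ILstar (hβL : 0 < βL) (hη : η3 < η1) (hmono : βH * θH < θL) :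
    Ir1 < ILstar θL θH βL βH η1 η3 Ir1 :=
  lt_add_of_pos_right _ (div_pos (sub_pos.mpr hmono) (mul_pos hβL (sub_pos.mpr hη)))

lemma lt_IHstar (hθH : 0 < θH) (hη : η3 < η1) : Ir1 < IHstar θH η1 η3 Ir1 :=
  lt_add_of_pos_right _ (div_pos hθH (sub_pos.mpr hη))

theorem stmt_7_general (hθH : 0 < θH) (hβL : 0 < βL) (hβH : 0 < βH) (hβ : βL + βH = 1)
    (hη : η3 < η1) (hη2 : 0 < η2) (hmono : βH * θH < θL) (hIL : Ir1 < IL) (hIH : Ir1 < IH) :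
    fobj θL θH βL βH η1 η2 η3 Ir1 Ir2 ΔC IL IH ≤
        fobj θL θH βL βH η1 η2 η3 Ir1 Ir2 ΔC
          (ILstar θL θH βL βH η1 η3 Ir1) (IHstar θH η1 η3 Ir1) ∧
      (fobj θL θH βL βH η1 η2 η3 Ir1 Ir2 ΔC IL IH =
          fobj θL θH βL βH η1 η2 η3 Ir1 Ir2 ΔC
            (ILstar θL θH βL βH η1 η3 Ir1) (IHstar θH η1 η3 Ir1) ↔
        IL = ILstar θL θH βL βH η1 η3 Ir1 ∧ IH = IHstar θH η1 η3 Ir1) := by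
  have ha : 0 < θL - βH * θH := sub_pos.mpr hmono
  have hd : 0 < η1 - η3 := sub_pos.mpr hη
  have hb : 0 < βL * (η1 - η3) := mul_pos hβL hd
  have hL : 0 < IL - Ir1 := sub_pos.mpr hIL
  have hH : 0 < IH - Ir1 := sub_pos.mpr hIH
  have hleL := logSurplus_le_logSurplus_div ha hb hL
  have hleH := mul_le_mul_of_nonneg_left (logSurplus_le_logSurplus_div hθH hd hH) hβH.le
  rw [fobj_eq_logSurplus_add hβ hη2 hIL hIH,
    fobj_eq_logSurplus_add hβ hη2 (lt_ILstar hβL hη hmono) (lt_IHstar hθH hη),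
    ILstar_sub, IHstar_sub]
  refine ⟨add_le_add_left (add_le_add hleL hleH) _, ?_⟩
  rw [add_left_inj, add_eq_add_iff_eq_and_eq hleL hleH, mul_right_inj' hβH.ne',
    logSurplus_eq_logSurplus_div_iff ha hb hL, logSurplus_eq_logSurplus_div_iff hθH hd hH,
    sub_eq_iff_eq_add', sub_eq_iff_eq_add', ILstar, IHstar]

end EdgeServer

theorem stmt_7
    (θL θH βL βH η1 η2 η3 Ir1 Ir2 ΔC : ℝ)
    (hθL : 0 < θL) (hθ : θL < θH)
    (hβL0 : 0 < βL) (hβL1 : βL < 1)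
    (hβH0 : 0 < βH) (hβH1 : βH < 1)
    (hβ : βL + βH = 1)
    (hη3 : 0 < η3) (hη13 : η3 < η1) (hη2 : 0 < η2)
    (hIr : Ir1 < Ir2)
    (hmono : βH * θH < θL) :
    ∀ IL IH : ℝ, Ir1 < IL → Ir1 < IH →
      fobj θL θH βL βH η1 η2 η3 Ir1 Ir2 ΔC (IL) (IH) ≤ fobj θL θH βL βH η1 η2 η3 Ir1 Ir2 ΔC (ILstar θL θH βL βH η1 η3 Ir1) (IHstar θH η1 η3 Ir1) ∧
      (fobj θL θH βL βH η1 η2 η3 Ir1 Ir2 ΔC (IL) (IH) = fobj θL θH βL βH η1 η2 η3 Ir1 Ir2 ΔC (ILstar θL θH βL βH η1 η3 Ir1) (IHstar θH η1 η3 Ir1) ↔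
        IL = ILstar θL θH βL βH η1 η3 Ir1 ∧ IH = IHstar θH η1 η3 Ir1) := by
  intro IL IH hIL hIH
  exact stmt_7_general (hθL.trans hθ) hβL0 hβH0 hβ hη13 hη2 hmono hIL hIH
end
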